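/- One-step inexact sparse Kaczmarz inequality against a possibly corrupted hyperplane: let λ > 0, f(x) = λ‖x‖₁ + (1/2)‖x‖² on ℝ^n. Let a ∈ ℝ^n with ‖a‖ = 1, x̂ ∈ ℝ^n, b̃ = ⟨a, x̂⟩, and b ∈ ℝ arbitrary. Let x ∈ ℝ^n, x* ∈ ∂f(x), and define x'* = x* − (⟨a, x⟩ − b)·a and x' = S_λ(x'*). Then D_f^{x'*}(x', x̂) ≤ D_f^{x*}(x, x̂) + (1/2)(⟨a, x⟩ − b)² − (⟨a, x⟩ − b)(⟨a, x⟩ − b̃). -/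

import Mathlib

/-- Euclidean inner product on finite-dimensional real coordinate space. -/
noncomputable def ip {I : Type*} [Fintype I] (u v : I → ℝ) : ℝ := ∑ i, u i * v i

/-- Euclidean norm. -/
noncomputable def enorm2 {I : Type*} [Fintype I] (v : I → ℝ) : ℝ :=
  Real.sqrt (∑ i, (v i) ^ 2)

/-- ℓ₁ norm. -/
noncomputable def norm1 {I : Type*} [Fintype I] (v : I → ℝ) : ℝ := ∑ i, |v i|

/-- ℓ∞ norm. -/
noncomputable def normInf {I : Type*} [Fintype I] (v : I → ℝ) : ℝ := ⨆ i, |v i|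

/-- Subdifferential of a convex function. -/
def subdiff {I : Type*} [Fintype I] (f : (I → ℝ) → ℝ) (x : I → ℝ) : Set (I → ℝ) :=
  {g | ∀ y, f y ≥ f x + ip g (y - x)}

/-- Bregman distance `D_f^{g}(x, y)` with respect to `f` and subgradient `g ∈ ∂f(x)`. -/
noncomputable def breg {I : Type*} [Fintype I] (f : (I → ℝ) → ℝ) (g x y : I → ℝ) : ℝ :=
  f y - f x - ip g (y - x)

/-- Fenchel conjugate. -/
noncomputable def fconj {I : Type*} [Fintype I] (f : (I → ℝ) → ℝ) (u : I → ℝ) : ℝ :=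
  ⨆ z, (ip u z - f z)

/-- Soft shrinkage (soft thresholding) operator. -/
noncomputable def softShrink {I : Type*} [Fintype I] (lam : ℝ) (x : I → ℝ) : I → ℝ :=
  fun i => Real.sign (x i) * max (|x i| - lam) 0

/-- Smallest singular value `σ_min(M) = inf_{x ≠ 0} ‖Mx‖/‖x‖`. -/
noncomputable def sigmaMin {I J : Type*} [Fintype I] [Fintype J] (M : Matrix I J ℝ) : ℝ :=
  sInf {r | ∃ x : J → ℝ, x ≠ 0 ∧ r = enorm2 (M.mulVec x) / enorm2 x}

/-- Largest singular value `σ_max(M) = sup_{x ≠ 0} ‖Mx‖/‖x‖`. -/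
noncomputable def sigmaMax {I J : Type*} [Fintype I] [Fintype J] (M : Matrix I J ℝ) : ℝ :=
  sSup {r | ∃ x : J → ℝ, x ≠ 0 ∧ r = enorm2 (M.mulVec x) / enorm2 x}

/-- Frobenius norm. -/
noncomputable def frobNorm {I J : Type*} [Fintype I] [Fintype J] (M : Matrix I J ℝ) : ℝ :=
  Real.sqrt (∑ i, ∑ j, (M i j) ^ 2)

/-- `‖A‖_{1,2} = sqrt (∑ i ‖a_i‖₁²)` where `a_iᵀ` are the rows of `A`. -/
noncomputable def norm12 {m n : ℕ} (A : Matrix (Fin m) (Fin n) ℝ) : ℝ :=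
  Real.sqrt (∑ i, (norm1 (A i)) ^ 2)

/-- Column submatrix `A_J`. -/
noncomputable def colSub {m n : ℕ} (A : Matrix (Fin m) (Fin n) ℝ) (J : Finset (Fin n)) :
    Matrix (Fin m) {j // j ∈ J} ℝ := A.submatrix id Subtype.val

/-- Row submatrix `A_I`. -/
noncomputable def rowSub {m n : ℕ} (A : Matrix (Fin m) (Fin n) ℝ) (I : Finset (Fin m)) :
    Matrix {i // i ∈ I} (Fin n) ℝ := A.submatrix Subtype.val id

/-- Submatrix `A_{I,J}` with rows in `I` and columns in `J`. -/
noncomputable def subMat {m n : ℕ} (A : Matrix (Fin m) (Fin n) ℝ)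
    (I : Finset (Fin m)) (J : Finset (Fin n)) :
    Matrix {i // i ∈ I} {j // j ∈ J} ℝ := A.submatrix Subtype.val Subtype.val

/-- `σ̃_min(A) = min{σ_min(A_J) : J ⊆ {1,…,n}, A_J ≠ 0}`. -/
noncomputable def sigmaTildeMin {m n : ℕ} (A : Matrix (Fin m) (Fin n) ℝ) : ℝ :=
  sInf {r | ∃ J : Finset (Fin n), colSub A J ≠ 0 ∧ r = sigmaMin (colSub A J)}

/-- `σ̃_{q−β,min}(A)` (with `k = (q−β)m`): min of `σ_min(A_{I,J})` over `|I| = k` and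
`J` nonempty. -/
noncomputable def sigmaTildeQBMin {m n : ℕ} (A : Matrix (Fin m) (Fin n) ℝ) (k : ℕ) : ℝ :=
  sInf {r | ∃ (I : Finset (Fin m)) (J : Finset (Fin n)),
    I.card = k ∧ J.Nonempty ∧ r = sigmaMin (subMat A I J)}

/-- Variant of `σ̃_{q−β,min}(A)` requiring moreover `A_J ≠ 0`. -/
noncomputable def sigmaTildeQBMin' {m n : ℕ} (A : Matrix (Fin m) (Fin n) ℝ) (k : ℕ) : ℝ :=
  sInf {r | ∃ (I : Finset (Fin m)) (J : Finset (Fin n)),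
    I.card = k ∧ J.Nonempty ∧ colSub A J ≠ 0 ∧ r = sigmaMin (subMat A I J)}

/-- `σ_{q−β,min}(A)` (with `k = (q−β)m`): min of `σ_min(A_I)` over `|I| = k`. -/
noncomputable def sigmaQBMin {m n : ℕ} (A : Matrix (Fin m) (Fin n) ℝ) (k : ℕ) : ℝ :=
  sInf {r | ∃ I : Finset (Fin m), I.card = k ∧ r = sigmaMin (rowSub A I)}

/-- The increasingly sorted rearrangement `y_(1) ≤ … ≤ y_(m)` of a finite tuple. -/
noncomputable def sortedVal {m : ℕ} (y : Fin m → ℝ) : Fin m → ℝ := y ∘ Tuple.sort y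

/-- The `q`-quantile of `y_1, …, y_m` in the case where `qm = k` is an integer:
`(y_(k) + y_(k+1))/2` (1-indexed). -/
noncomputable def quantileAt {m : ℕ} (k : ℕ) (y : Fin m → ℝ) : ℝ :=
  if h : 0 < k ∧ k < m then
    (sortedVal y ⟨k - 1, by omega⟩ + sortedVal y ⟨k, h.2⟩) / 2
  else 0

/-- `|x̂|_min = min{|x̂_j| : x̂_j ≠ 0}`. -/
noncomputable def xminOf {n : ℕ} (xhat : Fin n → ℝ) : ℝ :=
  sInf {r | ∃ j, xhat j ≠ 0 ∧ r = |xhat j|}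

/-! Moving the subgradient from `g` to `g - u` changes the Bregman distance to `y` by
`⟨u, y - x'⟩ - D_f^g(x, x')`, for every new base point `x'`. Strong convexity of `f` bounds
`D_f^g(x, x')` below by `m / 2 * ‖x - x'‖²`, and Young's inequality absorbs the cross term
`⟨u, x - x'⟩` into it at the cost of `‖u‖² / (2 m)`. The Kaczmarz step is `u = (⟨a, x⟩ - b) a`. -/

open Filter Topology
open scoped RealInnerProductSpace

lemma modulus_le_of_subgradient {E : Type*} [NormedAddCommGroup E] [NormedSpace ℝ E]
    {s : Set E} {φ : ℝ → ℝ} {f : E → ℝ} {x y : E} {g : E →ₗ[ℝ] ℝ}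
    (hf : UniformConvexOn s φ f) (hx : x ∈ s) (hy : y ∈ s)
    (hg : ∀ z ∈ s, f x + g (z - x) ≤ f z) :
    φ ‖x - y‖ ≤ f y - f x - g (y - x) := by
  have scaled_bound : ∀ c ∈ Set.Ioo (0 : ℝ) 1, c * φ ‖x - y‖ ≤ f y - f x - g (y - x) := by
    intro c ⟨hc0, hc1⟩
    have hc1' : 0 < 1 - c := sub_pos.2 hc1
    have lower := hg _ (hf.1 hx hy hc0.le hc1'.le (add_sub_cancel c 1))
    have upper := hf.2 hx hy hc0.le hc1'.le (add_sub_cancel c 1)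
    have displacement : c • x + (1 - c) • y - x = (1 - c) • (y - x) := by module
    rw [displacement, map_smul] at lower
    simp only [smul_eq_mul] at lower upper
    refine le_of_mul_le_mul_left ?_ hc1'
    linarith
  have tendsto_modulus : Tendsto (fun c : ℝ ↦ c * φ ‖x - y‖) (𝓝[<] 1) (𝓝 (φ ‖x - y‖)) := by
    simpa only [id_eq, one_mul] using
      (tendsto_id.mul_const (φ ‖x - y‖)).mono_left (nhdsWithin_le_nhds (a := (1 : ℝ)))
  exact le_of_tendsto tendsto_modulus
    (eventually_of_mem (Ioo_mem_nhdsLT one_pos) scaled_bound)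

lemma real_inner_le_norm_sq_add_norm_sq {E : Type*} [SeminormedAddCommGroup E]
    [InnerProductSpace ℝ E] {m : ℝ} (hm : 0 < m) (u v : E) :
    ⟪u, v⟫ ≤ 1 / (2 * m) * ‖u‖ ^ 2 + m / 2 * ‖v‖ ^ 2 := by
  have expand : ‖u - m • v‖ ^ 2 = ‖u‖ ^ 2 - 2 * (m * ⟪u, v⟫) + m ^ 2 * ‖v‖ ^ 2 := by
    rw [norm_sub_sq_real, real_inner_smul_right, norm_smul, mul_pow, Real.norm_eq_abs, sq_abs]
  have complete_square : 1 / (2 * m) * ‖u‖ ^ 2 + m / 2 * ‖v‖ ^ 2 - ⟪u, v⟫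
      = 1 / (2 * m) * ‖u - m • v‖ ^ 2 := by
    rw [expand]
    field_simp
    ring
  rw [← sub_nonneg, complete_square]
  positivity

section EuclideanCoordinates

variable {I : Type*} [Fintype I] {f : (I → ℝ) → ℝ} {m : ℝ}

lemma ip_eq_inner (u v : I → ℝ) : ip u v = ⟪WithLp.toLp 2 u, WithLp.toLp 2 v⟫ := by
  simp only [ip, PiLp.inner_apply, Real.inner_apply]

lemma enorm2_eq_norm (v : I → ℝ) : enorm2 v = ‖WithLp.toLp 2 v‖ := by
  simp only [enorm2, EuclideanSpace.norm_eq, Real.norm_eq_abs, sq_abs]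

lemma enorm2_smul (c : ℝ) (v : I → ℝ) : enorm2 (c • v) = |c| * enorm2 v := by
  rw [enorm2_eq_norm, enorm2_eq_norm, WithLp.toLp_smul, norm_smul, Real.norm_eq_abs]

lemma ip_smul_left (c : ℝ) (u v : I → ℝ) : ip (c • u) v = c * ip u v :=
  smul_dotProduct c u v

lemma ip_sub_left (u v w : I → ℝ) : ip (u - v) w = ip u w - ip v w :=
  sub_dotProduct u v w

lemma ip_sub_right (u v w : I → ℝ) : ip u (v - w) = ip u v - ip u w :=
  dotProduct_sub u v w

lemma breg_sub_left (u g x x' y : I → ℝ) :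
    breg f (g - u) x' y = breg f g x y - breg f g x x' + ip u (y - x') := by
  simp only [breg, ip_sub_left, ip_sub_right]
  ring

/-- Strong convexity with modulus `m` for the Euclidean norm `enorm2`. It is stated on
`EuclideanSpace ℝ I` because the norm instance of `I → ℝ` is the sup norm. -/
def EuclideanStrongConvex (m : ℝ) (f : (I → ℝ) → ℝ) : Prop :=
  StrongConvexOn Set.univ m fun v : EuclideanSpace ℝ I ↦ f v.ofLp

lemma euclideanStrongConvex_add_enorm2_sq {g : (I → ℝ) → ℝ} (hg : ConvexOn ℝ Set.univ g) (m : ℝ) :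
    EuclideanStrongConvex m fun v ↦ g v + m / 2 * enorm2 v ^ 2 := by
  rw [EuclideanStrongConvex, strongConvexOn_iff_convex]
  simpa only [enorm2_eq_norm, WithLp.toLp_ofLp, add_sub_cancel_right] using!
    hg.comp_linearMap (WithLp.linearEquiv 2 ℝ (I → ℝ)).toLinearMap

lemma convexOn_norm1 : ConvexOn ℝ Set.univ (norm1 : (I → ℝ) → ℝ) := by
  refine ⟨convex_univ, fun x _ y _ s t hs ht _ ↦ ?_⟩
  simp only [norm1, smul_eq_mul, Finset.mul_sum, ← Finset.sum_add_distrib]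
  refine Finset.sum_le_sum fun i _ ↦ ?_
  calc |s * x i + t * y i| ≤ |s * x i| + |t * y i| := abs_add_le _ _
    _ = s * |x i| + t * |y i| := by rw [abs_mul, abs_mul, abs_of_nonneg hs, abs_of_nonneg ht]

lemma EuclideanStrongConvex.mul_enorm2_sq_le_breg {g x : I → ℝ} (hf : EuclideanStrongConvex m f)
    (hg : g ∈ subdiff f x) (y : I → ℝ) :
    m / 2 * enorm2 (x - y) ^ 2 ≤ breg f g x y := by
  have uniform : UniformConvexOn Set.univ (fun r ↦ m / 2 * r ^ 2)
      fun v : EuclideanSpace ℝ I ↦ f v.ofLp := hf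
  have subgradient (z : EuclideanSpace ℝ I) :
      f x + innerₗ _ (WithLp.toLp 2 g) (z - WithLp.toLp 2 x) ≤ f z.ofLp := by
    simpa only [ip_eq_inner] using! hg z.ofLp
  simpa only [breg, ip_eq_inner, enorm2_eq_norm] using!
    modulus_le_of_subgradient uniform (Set.mem_univ (WithLp.toLp 2 x))
      (Set.mem_univ (WithLp.toLp 2 y)) fun z _ ↦ subgradient z

lemma EuclideanStrongConvex.breg_sub_le {g x : I → ℝ} (hf : EuclideanStrongConvex m f)
    (hm : 0 < m) (hg : g ∈ subdiff f x) (u x' y : I → ℝ) :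
    breg f (g - u) x' y ≤ breg f g x y + 1 / (2 * m) * enorm2 u ^ 2 - ip u (x - y) := by
  have young : ip u (x - x') ≤ 1 / (2 * m) * enorm2 u ^ 2 + m / 2 * enorm2 (x - x') ^ 2 := by
    simpa only [ip_eq_inner, enorm2_eq_norm] using
      real_inner_le_norm_sq_add_norm_sq hm (WithLp.toLp 2 u) (WithLp.toLp 2 (x - x'))
  calc breg f (g - u) x' y
      = breg f g x y - breg f g x x' + ip u (x - x') - ip u (x - y) := by
        rw [breg_sub_left u g x, ip_sub_right, ip_sub_right, ip_sub_right]
        ring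
    _ ≤ breg f g x y + 1 / (2 * m) * enorm2 u ^ 2 - ip u (x - y) := by
        linarith [hf.mul_enorm2_sq_le_breg hg x']

theorem stmt9_general (hf : EuclideanStrongConvex m f) (hm : 0 < m)
    (a xhat : I → ℝ) (b : ℝ) {x xs : I → ℝ} (hxs : xs ∈ subdiff f x) (x' : I → ℝ) :
    breg f (xs - (ip a x - b) • a) x' xhat ≤
      breg f xs x xhat + 1 / (2 * m) * ((ip a x - b) ^ 2 * enorm2 a ^ 2) -
        (ip a x - b) * (ip a x - ip a xhat) := by
  have step := hf.breg_sub_le hm hxs ((ip a x - b) • a) x' xhat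
  rwa [enorm2_smul, mul_pow, sq_abs, ip_smul_left, ip_sub_right] at step

end EuclideanCoordinates

/-- inequality (3.9): one-step inexact sparse Kaczmarz inequality
against a possibly corrupted hyperplane:
`D_f^{x'*}(x',x̂) ≤ D_f^{x*}(x,x̂) + ½(⟨a,x⟩−b)² − (⟨a,x⟩−b)(⟨a,x⟩−b̃)`. -/
theorem stmt9 {n : ℕ} (lam : ℝ) (hlam : 0 < lam)
    (f : (Fin n → ℝ) → ℝ)
    (hf : f = fun x => lam * norm1 x + (1 / 2) * enorm2 x ^ 2)
    (a : Fin n → ℝ) (ha : enorm2 a = 1)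
    (xhat : Fin n → ℝ) (btilde : ℝ) (hbt : btilde = ip a xhat) (b : ℝ)
    (x xs : Fin n → ℝ) (hxs : xs ∈ subdiff f x)
    (xs' x' : Fin n → ℝ)
    (hxs' : xs' = xs - (ip a x - b) • a)
    (hx' : x' = softShrink lam xs') :
    breg f xs' x' xhat ≤
      breg f xs x xhat + (1 / 2) * (ip a x - b) ^ 2 -
        (ip a x - b) * (ip a x - btilde) := by
  subst hf hbt hxs'
  simpa [ha] using stmt9_general (euclideanStrongConvex_add_enorm2_sq
    (convexOn_norm1.smul hlam.le) 1) one_pos a xhat b hxs x'
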